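/- arXiv:1912.02879 — 8 statements merged into one kernel-verified Lean document; each statement's English description precedes it below -/
import Mathlib

section
/- Let k ∈ {1,…,K} and suppose that k masks some k' ≠ k, i.e. supp(Q_k) ⊆ supp(Q_{k'}) for some k' ≠ k. Then the latent factor Θ_k is not identifiable: there exist matrices Θ̃ ∈ ℝ^{N×K} and Ã ∈ ℝ^{J×K} satisfying assumptions (1)–(3) with Θ̃Ãᵀ = ΘAᵀ such that Θ̃_k and Θ_k are linearly independent. -/
/-!
If `supp Q_k ⊆ supp Q_{k'}` with `k' ≠ k`, the factor `Θ_k` can be replaced by `Θ_k + Θ_{k'}`,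
compensating with `A_{k'} - A_k` in place of `A_{k'}`, since
`Θ_k A_kᵀ + Θ_{k'} A_{k'}ᵀ = (Θ_k + Θ_{k'}) A_kᵀ + Θ_{k'} (A_{k'} - A_k)ᵀ`.
The masking hypothesis keeps the new column `A_{k'} - A_k` supported in `supp Q_{k'}`.
Both changes are elementary column operations (`linearIndependent_add_smul_iff`), so they preserve
linear independence; on a block `R(S)` with `k ∉ S` the column `A_k` vanishes and nothing changes.
-/

open Matrix

/-- The support of column `k` of the binary design matrix `Q`. -/
def suppQ {J K : ℕ} (Q : Fin J → Fin K → Bool) (k : Fin K) : Set (Fin J) :=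
  {j | Q j k = true}

/-- `R(S)`: the rows `j` such that `Q j k = 1` exactly for `k ∈ S`. -/
def Rset {J K : ℕ} (Q : Fin J → Fin K → Bool) (S : Set (Fin K)) : Set (Fin J) :=
  {j | ∀ k, Q j k = true ↔ k ∈ S}

/-- Assumption (1): the columns of `Θ` are linearly independent. -/
def Assm1 {N K : ℕ} (Θ : Matrix (Fin N) (Fin K) ℝ) : Prop :=
  LinearIndependent ℝ (fun k : Fin K => fun i : Fin N => Θ i k)

/-- Assumption (2): for every `S` with `R(S)` nonempty, the columns of the
submatrix `A_{[R(S),S]}` are linearly independent. -/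
def Assm2 {J K : ℕ} (A : Matrix (Fin J) (Fin K) ℝ) (Q : Fin J → Fin K → Bool) : Prop :=
  ∀ S : Set (Fin K), (Rset Q S).Nonempty →
    LinearIndependent ℝ (fun k : S => fun j : Rset Q S => A j.1 k.1)

/-- Assumption (3): `A_k(j) = 0` whenever `Q_k(j) = 0`. -/
def Assm3 {J K : ℕ} (A : Matrix (Fin J) (Fin K) ℝ) (Q : Fin J → Fin K → Bool) : Prop :=
  ∀ j k, Q j k = false → A j k = 0

theorem latent_factor_not_identifiable_of_masking
    {K N J : ℕ} (hK : 0 < K) (hN : 0 < N) (hJ : 0 < J)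
    (Θ : Matrix (Fin N) (Fin K) ℝ) (A : Matrix (Fin J) (Fin K) ℝ)
    (Q : Fin J → Fin K → Bool)
    (hΘ : Assm1 Θ) (hA2 : Assm2 A Q) (hA3 : Assm3 A Q)
    (k : Fin K)
    (hmask : ∃ k' : Fin K, k' ≠ k ∧ suppQ Q k ⊆ suppQ Q k') :
    ∃ (Θ' : Matrix (Fin N) (Fin K) ℝ) (A' : Matrix (Fin J) (Fin K) ℝ),
      Assm1 Θ' ∧ Assm2 A' Q ∧ Assm3 A' Q ∧ Θ' * A'ᵀ = Θ * Aᵀ ∧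
      LinearIndependent ℝ ![fun i : Fin N => Θ' i k, fun i : Fin N => Θ i k] := by
  obtain ⟨k', hne, hsub⟩ := hmask
  refine ⟨Matrix.of fun i l => Θ i l + (if l = k then 1 else 0) * Θ i k',
    Matrix.of fun j l => A j l + (if l = k' then -1 else 0) * A j k, ?_, ?_, ?_, ?_, ?_⟩
  · have h := (linearIndependent_add_smul_iff (c := fun l : Fin K => if l = k then (1 : ℝ) else 0)
      (i := k') (if_neg hne)).2 hΘ
    exact h
  · intro S hS
    by_cases hk : k ∈ S
    · have h := (linearIndependent_add_smul_iff
        (c := fun l : S => if l.1 = k' then (-1 : ℝ) else 0)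
        (i := (⟨k, hk⟩ : S)) (if_neg hne.symm)).2 (hA2 S hS)
      exact h
    · have hzero : ∀ j : Rset Q S, A j.1 k = 0 := fun j =>
        hA3 _ _ (by simpa using fun h => hk ((j.2 k).1 h))
      simpa only [Matrix.of_apply, hzero, mul_zero, add_zero] using hA2 S hS
  · intro j l hjl
    by_cases hl : l = k'
    · subst hl
      have hjk : Q j k = false := by
        by_contra h
        have : Q j l = true := hsub (show Q j k = true by simpa using h)
        simp [this] at hjl
      simp [hA3 j l hjl, hA3 j k hjk]
    · simp [hl, hA3 j l hjl]
  · ext i j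
    simp only [Matrix.mul_apply, Matrix.of_apply, Matrix.transpose_apply, add_mul, mul_add, ite_mul,
      mul_ite, one_mul, zero_mul, neg_mul, mul_neg, mul_zero, Finset.sum_add_distrib]
    simp [hne]
  -- The pair `(Θ_k + Θ_{k'}, Θ_k)` comes from the independent pair `(Θ_{k'}, Θ_k)`.
  · have hpair : LinearIndependent ℝ ![fun i : Fin N => Θ i k', fun i : Fin N => Θ i k] := by
      have h := LinearIndependent.comp hΘ ![k', k] (by
        intro a b hab
        fin_cases a <;> fin_cases b <;> simp_all)
      convert h using 1
      ext a i
      fin_cases a <;> rfl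
    rw [LinearIndependent.pair_iff] at hpair ⊢
    intro s t hst
    have h := hpair s (s + t) (by
      rw [← hst]
      ext i
      simp
      ring)
    exact ⟨h.1, by linarith [h.1, h.2]⟩
end

section
/- Suppose supp(Q_k) is nonempty for every k ∈ {1,…,K}. Let k ∈ {1,…,K} and suppose that no k' ≠ k masks k, i.e. for every k' ≠ k the support of Q_{k'} is not contained in the support of Q_k. Then the factor loading A_k is identifiable: for every pair of matrices Θ̃ ∈ ℝ^{N×K}, Ã ∈ ℝ^{J×K} satisfying assumptions (1)–(3) and Θ̃Ãᵀ = ΘAᵀ, the column Ã_k is a nonzero scalar multiple of A_k. -/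
/-!
Since `Θ'` has a left inverse `L`, the equation `Θ' A'ᵀ = Θ Aᵀ` gives `A'ᵀ = G Aᵀ` with `G = L Θ`:
each column `A'_k` is the combination `∑ l, G k l • A_l`. If `l ≠ k`, then `l` does not mask `k`,
so some row `j₀` loads on `l` but not on `k`. On all rows with the same pattern `S` as `j₀` the
column `A'_k` vanishes, and linear independence of the columns of `A` indexed by `S` on these rows
forces `G k l = 0`. Hence `A'_k = G k k • A_k`, and the scalar is nonzero because `A'_k ≠ 0`.
-/

open Matrix

/-- If a combination of all columns of `A` vanishes on every row with the same pattern as `j₀`,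
then its coefficients vanish on that pattern. -/
lemma coeff_eq_zero_of_vanish {J K : ℕ} {A : Matrix (Fin J) (Fin K) ℝ} {Q : Fin J → Fin K → Bool}
    (hA2 : Assm2 A Q) (hA3 : Assm3 A Q) (j₀ : Fin J) (g : Fin K → ℝ)
    (h : ∀ j, (∀ l, Q j l = Q j₀ l) → ∑ l, g l * A j l = 0) (l : Fin K) (hl : Q j₀ l = true) :
    g l = 0 := by
  classical
  have hli := hA2 {l | Q j₀ l = true} ⟨j₀, fun _ => Iff.rfl⟩
  rw [Fintype.linearIndependent_iff] at hli
  refine hli (fun x => g x.1) ?_ ⟨l, hl⟩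
  funext ⟨j, hj⟩
  have hj' : ∀ l, Q j l = Q j₀ l := fun l => Bool.eq_iff_iff.mpr (hj l)
  have hsum := h j hj'
  simp only [Finset.sum_apply, Pi.smul_apply, smul_eq_mul, Pi.zero_apply]
  -- Columns outside the pattern contribute nothing to the full sum.
  rw [← hsum]
  refine Finset.sum_of_injOn Subtype.val Subtype.val_injective.injOn (by simp) ?_ (by simp)
  intro m _ hm
  rw [hA3 j m, mul_zero]
  rw [hj' m]
  simpa using hm

theorem factor_loading_identifiable_of_not_masked
    {K N J : ℕ} (hK : 0 < K) (hN : 0 < N) (hJ : 0 < J)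
    (Θ : Matrix (Fin N) (Fin K) ℝ) (A : Matrix (Fin J) (Fin K) ℝ)
    (Q : Fin J → Fin K → Bool)
    (hΘ : Assm1 Θ) (hA2 : Assm2 A Q) (hA3 : Assm3 A Q)
    (hsupp : ∀ k : Fin K, (suppQ Q k).Nonempty)
    (k : Fin K)
    (hmask : ∀ k' : Fin K, k' ≠ k → ¬ suppQ Q k' ⊆ suppQ Q k)
    (Θ' : Matrix (Fin N) (Fin K) ℝ) (A' : Matrix (Fin J) (Fin K) ℝ)
    (hΘ' : Assm1 Θ') (hA2' : Assm2 A' Q) (hA3' : Assm3 A' Q)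
    (hM : Θ' * A'ᵀ = Θ * Aᵀ) :
    ∃ c : ℝ, c ≠ 0 ∧ (fun j : Fin J => A' j k) = c • (fun j : Fin J => A j k) := by
  classical
  obtain ⟨L, hL⟩ : ∃ L : Matrix (Fin K) (Fin N) ℝ, L * Θ' = 1 := by
    obtain ⟨f, hf⟩ := LinearMap.exists_leftInverse_of_injective (Matrix.toLin' Θ')
      (LinearMap.ker_eq_bot.mpr (Matrix.mulVec_injective_iff.mpr hΘ'))
    refine ⟨LinearMap.toMatrix' f, ?_⟩
    rw [← LinearMap.toMatrix'_toLin' Θ', ← LinearMap.toMatrix'_comp, hf, LinearMap.toMatrix'_id]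
  have hG : A'ᵀ = (L * Θ) * Aᵀ := by
    rw [Matrix.mul_assoc, ← hM, ← Matrix.mul_assoc, hL, Matrix.one_mul]
  set G := L * Θ
  have hcol : ∀ j, A' j k = ∑ l, G k l * A j l := fun j => by
    simpa [Matrix.mul_apply] using congrFun (congrFun hG k) j
  have hoff : ∀ l, l ≠ k → G k l = 0 := by
    intro l hl
    obtain ⟨j₀, hj₀l, hj₀k⟩ := Set.not_subset.mp (hmask l hl)
    refine coeff_eq_zero_of_vanish hA2 hA3 j₀ (G k) (fun j hj => ?_) l hj₀l
    rw [← hcol]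
    refine hA3' j k ?_
    rw [hj k]
    simpa [suppQ] using hj₀k
  have hdiag : ∀ j, A' j k = G k k * A j k := fun j => by
    rw [hcol, Finset.sum_eq_single k (fun l _ hl => by rw [hoff l hl, zero_mul]) (by simp)]
  refine ⟨G k k, fun h0 => ?_, funext hdiag⟩
  obtain ⟨j₀, hj₀⟩ := hsupp k
  -- If `G k k = 0`, then `A'_k = 0`, a nontrivial linear relation among the columns of `A'`.
  have h1 := coeff_eq_zero_of_vanish hA2' hA3' j₀ (Pi.single k 1)
    (fun j _ => by simp [Pi.single_apply, hdiag, h0]) k hj₀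
  simp at h1
end

section
/- Suppose supp(Q_k) is nonempty for every k ∈ {1,…,K}. Let k ∈ {1,…,K} and suppose that some k' ≠ k masks k, i.e. supp(Q_{k'}) ⊆ supp(Q_k) for some k' ≠ k. Then the factor loading A_k is not identifiable: there exist matrices Θ̃ ∈ ℝ^{N×K} and Ã ∈ ℝ^{J×K} satisfying assumptions (1)–(3) with Θ̃Ãᵀ = ΘAᵀ such that Ã_k and A_k are linearly independent. -/
open Matrix

/-- Assumption (2) in terms of coefficient vectors on all columns that vanish off `S`; this form
avoids sums over the subtype `S`. -/
lemma assm2_iff {J K : ℕ} (A : Matrix (Fin J) (Fin K) ℝ) (Q : Fin J → Fin K → Bool) :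
    Assm2 A Q ↔ ∀ S : Set (Fin K), (Rset Q S).Nonempty → ∀ g : Fin K → ℝ,
      (∀ l, l ∉ S → g l = 0) → (∀ j ∈ Rset Q S, ∑ l, g l * A j l = 0) → ∀ l, g l = 0 := by
  classical
  have key : ∀ (S : Set (Fin K)) (g : Fin K → ℝ), (∀ l, l ∉ S → g l = 0) → ∀ j,
      ∑ l : S, g l * A j l = ∑ l, g l * A j l := by
    intro S g hg j
    rw [← Finset.sum_subtype (Finset.univ.filter (· ∈ S)) (by simp) (fun l => g l * A j l)]
    refine Finset.sum_subset (Finset.subset_univ _) fun l _ hl => ?_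
    rw [hg l (by simpa using hl), zero_mul]
  refine forall_congr' fun S => imp_congr_right fun _ => ?_
  rw [Fintype.linearIndependent_iff]
  constructor
  · intro h g hg hsum l
    by_cases hl : l ∈ S
    · refine h (fun l => g l) ?_ ⟨l, hl⟩
      funext j
      simpa [Finset.sum_apply] using (key S g hg j).trans (hsum j j.2)
    · exact hg l hl
  · intro h g hsum l
    set g' : Fin K → ℝ := fun x => if hx : x ∈ S then g ⟨x, hx⟩ else 0 with hg'
    have hext : ∀ l : S, g' l = g l := by simp [hg']
    have hoff : ∀ l, l ∉ S → g' l = 0 := fun l hl => by simp [hg', hl]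
    rw [← hext]
    refine h g' hoff (fun j hj => ?_) l
    rw [← key S g' hoff]
    simp only [hext]
    simpa [Finset.sum_apply] using congrFun hsum ⟨j, hj⟩

theorem factor_loading_not_identifiable_of_masked
    {K N J : ℕ} (hK : 0 < K) (hN : 0 < N) (hJ : 0 < J)
    (Θ : Matrix (Fin N) (Fin K) ℝ) (A : Matrix (Fin J) (Fin K) ℝ)
    (Q : Fin J → Fin K → Bool)
    (hΘ : Assm1 Θ) (hA2 : Assm2 A Q) (hA3 : Assm3 A Q)
    (hsupp : ∀ k : Fin K, (suppQ Q k).Nonempty)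
    (k : Fin K)
    (hmask : ∃ k' : Fin K, k' ≠ k ∧ suppQ Q k' ⊆ suppQ Q k) :
    ∃ (Θ' : Matrix (Fin N) (Fin K) ℝ) (A' : Matrix (Fin J) (Fin K) ℝ),
      Assm1 Θ' ∧ Assm2 A' Q ∧ Assm3 A' Q ∧ Θ' * A'ᵀ = Θ * Aᵀ ∧
      LinearIndependent ℝ ![fun j : Fin J => A' j k, fun j : Fin J => A j k] := by
  obtain ⟨k', hne, hsub⟩ := hmask
  have hA2' := (assm2_iff A Q).1 hA2
  have hmul : ∀ j l, (A * transvection k' k (1 : ℝ)) j l = A j l + if l = k then A j k' else 0 := by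
    intro j l
    split_ifs with h
    · subst h; simp
    · simp [h]
  refine ⟨Θ * transvection k k' (-1 : ℝ), A * transvection k' k (1 : ℝ), ?_, ?_, ?_, ?_, ?_⟩
  · have hinj : Function.Injective Θ.mulVec := mulVec_injective_iff.2 hΘ
    refine (mulVec_injective_iff (M := Θ * transvection k k' (-1 : ℝ))).1 (fun v w h => ?_)
    rw [← mulVec_mulVec, ← mulVec_mulVec] at h
    have h2 := congrArg (transvection k k' (1 : ℝ)).mulVec (hinj h)
    simpa [mulVec_mulVec, transvection_mul_transvection_same _ _ hne.symm] using h2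
  · refine (assm2_iff _ Q).2 fun S hS g hg hsum => ?_
    -- On the new columns, `g` acts like `g` with `g k` added to its `k'` coordinate on the old ones.
    have hsum' : ∀ j ∈ Rset Q S, ∑ l, g l * A j l + g k * A j k' = 0 := by
      intro j hj
      simpa [hmul, mul_add, Finset.sum_add_distrib] using hsum j hj
    by_cases hk' : k' ∈ S
    · have h0 := hA2' S hS (fun l => g l + if l = k' then g k else 0)
        (fun l hl => by
          have : l ≠ k' := fun h => hl (h ▸ hk')
          simp [this, hg l hl])
        (fun j hj => by
          simpa [add_mul, Finset.sum_add_distrib] using hsum' j hj)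
      have hk : g k = 0 := by simpa [hne.symm] using h0 k
      intro l
      simpa [hk] using h0 l
    · refine hA2' S hS g hg fun j hj => ?_
      have hQ : Q j k' = false := by
        have := (hj k').not.2 hk'
        simpa using this
      simpa [hA3 j k' hQ] using hsum' j hj
  · intro j l hl
    rw [hmul, hA3 j l hl]
    split_ifs with h
    · subst h
      have hQ : Q j k' = false := by
        by_contra hc
        have h1 : Q j l = true := hsub (show Q j k' = true by simpa using hc)
        simp [h1] at hl
      simp [hA3 j k' hQ]
    · simp
  · have hT : (transvection k' k (1 : ℝ))ᵀ = transvection k k' 1 := by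
      simp [transvection]
    rw [transpose_mul, hT, Matrix.mul_assoc, ← Matrix.mul_assoc (transvection k k' (-1 : ℝ)),
      transvection_mul_transvection_same _ _ hne.symm]
    simp
  · rw [LinearIndependent.pair_iff]
    intro s t hst
    obtain ⟨j₀, hj₀⟩ := hsupp k'
    have hj₀k : Q j₀ k = true := hsub hj₀
    have hj₀k' : Q j₀ k' = true := hj₀
    have h0 := hA2' {l | Q j₀ l = true} ⟨j₀, fun l => Iff.rfl⟩
      (fun l => (if l = k then s + t else 0) + if l = k' then s else 0)
      (fun l hl => by
        have h1 : l ≠ k := fun h => hl (h ▸ hj₀k)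
        have h2 : l ≠ k' := fun h => hl (h ▸ hj₀k')
        simp [h1, h2])
      (fun j _ => by
        have h := congrFun hst j
        simp only [Pi.add_apply, Pi.smul_apply, smul_eq_mul, hmul, if_true, Pi.zero_apply] at h
        simp only [add_mul, Finset.sum_add_distrib, ite_mul, zero_mul, Finset.sum_ite_eq',
          Finset.mem_univ, if_true]
        linarith)
    have hs : s = 0 := by simpa [hne] using h0 k'
    have hk : s + t = 0 := by simpa [hne.symm] using h0 k
    exact ⟨hs, by linarith⟩
end

section
/- Let k, k' ∈ {1,…,K} with k ≠ k'. Suppose supp(Q_{k'}) is nonempty and k' masks k (i.e. supp(Q_{k'}) ⊆ supp(Q_k)). Then, under assumption (2), the columns A_k and A_{k'} are linearly independent vectors in ℝ^J. -/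
/-!
Take a row `j₀` in the support of the masking column and let `S` be the set of columns that are
active in that row. Masking puts both columns in `S`, and `R(S)` contains `j₀`, so `Assm2`
makes the two columns linearly independent already after restriction to the rows in `R(S)`. Hence
they are linearly independent.
-/

open Matrix

theorem columns_linearIndependent_of_masking
    {K J : ℕ} (hK : 0 < K) (hJ : 0 < J)
    (A : Matrix (Fin J) (Fin K) ℝ) (Q : Fin J → Fin K → Bool)
    (hA2 : Assm2 A Q)
    (k k' : Fin K) (hkk' : k ≠ k')
    (hne : (suppQ Q k').Nonempty)
    (hmask : suppQ Q k' ⊆ suppQ Q k) :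
    LinearIndependent ℝ ![fun j : Fin J => A j k, fun j : Fin J => A j k'] := by
  obtain ⟨j₀, hj₀⟩ := hne
  -- `S` is the set of columns active in row `j₀`, so `j₀ ∈ R(S)` and masking gives `k, k' ∈ S`.
  let S : Set (Fin K) := {l | Q j₀ l = true}
  have hS : LinearIndependent ℝ (fun l : S => fun j : Rset Q S => A j.1 l.1) :=
    hA2 S ⟨j₀, fun _ => Iff.rfl⟩
  have hk : k ∈ S := hmask hj₀
  have hk' : k' ∈ S := hj₀
  have hinj : Function.Injective ![(⟨k, hk⟩ : S), ⟨k', hk'⟩] := by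
    intro a b hab
    fin_cases a <;> fin_cases b <;> simp_all [Subtype.ext_iff]
  have hcols : LinearIndependent ℝ
      ![fun j : Rset Q S => A j.1 k, fun j : Rset Q S => A j.1 k'] := by
    have hcomp := hS.comp _ hinj
    have heq : (fun l : S => fun j : Rset Q S => A j.1 l.1) ∘ ![(⟨k, hk⟩ : S), ⟨k', hk'⟩]
        = ![fun j : Rset Q S => A j.1 k, fun j : Rset Q S => A j.1 k'] := by
      funext i
      fin_cases i <;> rfl
    rwa [heq] at hcomp
  -- A vanishing combination of the full columns also vanishes after restriction to `R(S)`.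
  exact LinearIndependent.pair_iff.mpr fun s t hst =>
    LinearIndependent.pair_iff.mp hcols s t (funext fun j => congrFun hst j.1)
end

section
/- Let k ∈ {1,…,K} and suppose that {k} equals the intersection of all subsets S ⊆ {1,…,K} such that k ∈ S and R(S) is nonempty (with at least one such S existing). Then k does not mask any k' ≠ k, i.e. for every k' ≠ k the support of Q_k is not contained in the support of Q_{k'}. -/
open Matrix

theorem not_masking_of_singleton_eq_iInter
    {K J : ℕ} (hK : 0 < K) (hJ : 0 < J)
    (Q : Fin J → Fin K → Bool)
    (k : Fin K)
    (hex : ∃ S : Set (Fin K), k ∈ S ∧ (Rset Q S).Nonempty)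
    (hinter : ({k} : Set (Fin K)) =
      ⋂ S ∈ {S : Set (Fin K) | k ∈ S ∧ (Rset Q S).Nonempty}, S) :
    ∀ k' : Fin K, k' ≠ k → ¬ suppQ Q k ⊆ suppQ Q k' := by
  intro k' hne hsub
  apply hne
  rw [← Set.mem_singleton_iff, hinter]
  simp only [Set.mem_iInter, Set.mem_ofPred_eq]
  -- A row `j ∈ R(S)` with `k ∈ S` lies in `supp Q_k`, hence in `supp Q_{k'}`, so `k' ∈ S`.
  rintro S ⟨hkS, j, hj⟩
  exact (hj k').1 (hsub ((hj k).2 hkS))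
end

section
/- Suppose Θ, A, Q satisfy assumptions (1)–(3), and let S ⊆ {1,…,K} with R(S) nonempty. Then the linear span of the columns {M_j : j ∈ R(S)} of M = ΘAᵀ equals the linear span of {Θ_k : k ∈ S}, and this subspace of ℝ^N has dimension |S|. -/
/-!
For `j ∈ R(S)`, row `j` of `A` is supported on `S`, so `M_j = ∑ k ∈ S, A j k • Θ_k`; this gives
the inclusion of the span of these `M_j` in the span of the `Θ_k`, `k ∈ S`. Conversely the submatrix
`A_{[R(S),S]}` has linearly independent columns, hence a left inverse `C`
(`exists_left_inverse_of_linearIndependent_columns`), and `Θ_k = ∑ j ∈ R(S), C k j • M_j`.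
The dimension is `|S|` because the columns of `Θ` are linearly independent.
-/

open Matrix

/-- A real matrix with linearly independent columns has a left inverse. -/
lemma exists_left_inverse_of_linearIndependent_columns {m n : Type*} [Fintype m] [Fintype n]
    [DecidableEq n] (B : Matrix m n ℝ)
    (hB : LinearIndependent ℝ (fun k : n => fun j : m => B j k)) :
    ∃ C : Matrix n m ℝ, C * B = 1 := by
  classical
  have hinj : Function.Injective B.mulVec := Matrix.mulVec_injective_iff.mpr hB
  obtain ⟨g, hg⟩ := LinearMap.exists_leftInverse_of_injective (Matrix.toLin' B)
    (LinearMap.ker_eq_bot.mpr hinj)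
  refine ⟨LinearMap.toMatrix' g, ?_⟩
  have h := congrArg LinearMap.toMatrix' hg
  rwa [LinearMap.toMatrix'_comp, LinearMap.toMatrix'_toLin', LinearMap.toMatrix'_id] at h

theorem span_columns_M_eq_span_Theta
    {K N J : ℕ} (hK : 0 < K) (hN : 0 < N) (hJ : 0 < J)
    (Θ : Matrix (Fin N) (Fin K) ℝ) (A : Matrix (Fin J) (Fin K) ℝ)
    (Q : Fin J → Fin K → Bool)
    (hΘ : Assm1 Θ) (hA2 : Assm2 A Q) (hA3 : Assm3 A Q)
    (S : Finset (Fin K)) (hS : (Rset Q ↑S).Nonempty) :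
    Submodule.span ℝ ((fun j : Fin J => fun i : Fin N => (Θ * Aᵀ) i j) '' Rset Q ↑S) =
      Submodule.span ℝ ((fun k : Fin K => fun i : Fin N => Θ i k) '' ↑S) ∧
    Module.finrank ℝ
      ↥(Submodule.span ℝ ((fun j : Fin J => fun i : Fin N => (Θ * Aᵀ) i j) '' Rset Q ↑S))
      = S.card := by
  classical
  have hM : ∀ j ∈ Rset Q ↑S, (fun i : Fin N => (Θ * Aᵀ) i j) =
      ∑ k : (S : Set (Fin K)), A j k • (fun i : Fin N => Θ i k) := by
    intro j hj
    ext i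
    have hzero : ∀ k ∉ S, Θ i k * A j k = 0 := by
      intro k hk
      have hQ : Q j k = false := by
        rw [← Bool.not_eq_true]
        exact fun h => hk (Finset.mem_coe.mp ((hj k).mp h))
      rw [hA3 j k hQ, mul_zero]
    calc (Θ * Aᵀ) i j = ∑ k, Θ i k * A j k := by simp [Matrix.mul_apply]
      _ = ∑ k ∈ S, Θ i k * A j k :=
        (Finset.sum_subset (Finset.subset_univ S) fun k _ hk => hzero k hk).symm
      _ = ∑ k : (S : Set (Fin K)), Θ i k * A j k :=
        (Finset.sum_coe_sort S fun k => Θ i k * A j k).symm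
      _ = _ := by simp [Finset.sum_apply, mul_comm]
  have hspan : Submodule.span ℝ
        ((fun j : Fin J => fun i : Fin N => (Θ * Aᵀ) i j) '' Rset Q ↑S) =
      Submodule.span ℝ ((fun k : Fin K => fun i : Fin N => Θ i k) '' ↑S) := by
    apply le_antisymm
    · rw [Submodule.span_le]
      rintro _ ⟨j, hj, rfl⟩
      simp only [SetLike.mem_coe]
      rw [hM j hj]
      exact Submodule.sum_mem _ fun k _ =>
        Submodule.smul_mem _ _ (Submodule.subset_span ⟨k, k.2, rfl⟩)
    · rw [Submodule.span_le]
      rintro _ ⟨k, hk, rfl⟩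
      obtain ⟨C, hC⟩ := exists_left_inverse_of_linearIndependent_columns
        (Matrix.of fun (j : Rset Q ↑S) (k : (S : Set (Fin K))) => A j k) (hA2 ↑S hS)
      have hΘk : (fun i : Fin N => Θ i k) =
          ∑ j : Rset Q ↑S, C ⟨k, hk⟩ j • (fun i : Fin N => (Θ * Aᵀ) i j) := by
        have hCl : ∀ l : (S : Set (Fin K)),
            ∑ j : Rset Q ↑S, C ⟨k, hk⟩ j * A j l = if ⟨k, hk⟩ = l then 1 else 0 := by
          intro l
          have h := congrFun (congrFun hC ⟨k, hk⟩) l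
          simpa only [Matrix.mul_apply, Matrix.one_apply, Matrix.of_apply] using h
        calc (fun i : Fin N => Θ i k)
            = ∑ l : (S : Set (Fin K)), (∑ j : Rset Q ↑S, C ⟨k, hk⟩ j * A j l) •
                (fun i : Fin N => Θ i l) := by
              simp only [hCl, ite_smul, one_smul, zero_smul, Finset.sum_ite_eq,
                Finset.mem_univ, if_true]
          _ = ∑ j : Rset Q ↑S, ∑ l : (S : Set (Fin K)), (C ⟨k, hk⟩ j * A j l) •
                (fun i : Fin N => Θ i l) := by
              simp only [Finset.sum_smul]
              exact Finset.sum_comm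
          _ = _ := by
              refine Finset.sum_congr rfl fun j _ => ?_
              rw [hM j j.2, Finset.smul_sum]
              simp only [mul_smul]
      simp only [SetLike.mem_coe]
      rw [hΘk]
      exact Submodule.sum_mem _ fun j _ =>
        Submodule.smul_mem _ _ (Submodule.subset_span ⟨j, j.2, rfl⟩)
  refine ⟨hspan, ?_⟩
  have hli : LinearIndependent ℝ
      (fun k : (S : Set (Fin K)) => fun i : Fin N => Θ i k) :=
    LinearIndependent.comp hΘ _ Subtype.val_injective
  rw [hspan, Set.image_eq_range, finrank_span_eq_card hli]
  simp
end

section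
/- Suppose A and Q satisfy assumptions (2) and (3). Let k₀ ∈ {1,…,K} and let c_1,…,c_K ∈ ℝ be coefficients such that Σ_{k=1}^K c_k·A_k(j) = 0 for every j ∉ supp(Q_{k₀}). Then for every k' ≠ k₀ with c_{k'} ≠ 0, the index k' masks k₀, i.e. supp(Q_{k'}) ⊆ supp(Q_{k₀}). -/
/-!
If some row `j₀` lay in the support of column `k'` but not of column `k₀`, let `S` be the set of
columns whose support contains `j₀`. Every row of `R(S)` avoids the support of column `k₀`, so the
given combination vanishes there, and only the columns in `S` contribute to it. Linear
independence of these columns on `R(S)` forces `c k' = 0`.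
-/

open Matrix

theorem masks_of_vanishing_combination
    {K J : ℕ} (hK : 0 < K) (hJ : 0 < J)
    (A : Matrix (Fin J) (Fin K) ℝ) (Q : Fin J → Fin K → Bool)
    (hA2 : Assm2 A Q) (hA3 : Assm3 A Q)
    (k₀ : Fin K) (c : Fin K → ℝ)
    (hc : ∀ j : Fin J, j ∉ suppQ Q k₀ → ∑ k : Fin K, c k * A j k = 0)
    (k' : Fin K) (hk' : k' ≠ k₀) (hck' : c k' ≠ 0) :
    suppQ Q k' ⊆ suppQ Q k₀ := by
  classical
  intro j₀ hj₀
  by_contra hn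
  -- `S` is the row pattern of `j₀`; it contains `k'` but not `k₀`.
  let S : Set (Fin K) := {k | Q j₀ k = true}
  have hne : (Rset Q S).Nonempty := ⟨j₀, fun k => Iff.rfl⟩
  have hli := Fintype.linearIndependent_iff.mp (hA2 S hne) (fun k => c k.1)
  refine hck' (hli ?_ ⟨k', hj₀⟩)
  funext j
  have hj : ∀ k, Q j.1 k = true ↔ k ∈ S := j.2
  have h0 := hc j.1 (fun h => hn ((hj k₀).mp h))
  simp only [Finset.sum_apply, Pi.smul_apply, smul_eq_mul, Pi.zero_apply]
  rw [← h0]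
  -- On rows of `R(S)`, the columns outside `S` contribute nothing to the full sum.
  refine Finset.sum_of_injOn Subtype.val Subtype.val_injective.injOn (by simp) ?_ (fun _ _ => rfl)
  intro k _ hk
  have hkS : k ∉ S := fun h => hk ⟨⟨k, h⟩, by simp, rfl⟩
  rw [hA3 j.1 k (by simpa using mt (hj k).mp hkS), mul_zero]
end

section
/- Suppose Θ, A, Q satisfy assumptions (1)–(3) and supp(Q_k) is nonempty for every k ∈ {1,…,K}. If the latent factor Θ_k is not identifiable for some k, then there exists k' ≠ k such that the factor loading A_{k'} is not identifiable; i.e. there exist matrices Θ̃ ∈ ℝ^{N×K} and Ã ∈ ℝ^{J×K} satisfying assumptions (1)–(3) with Θ̃Ãᵀ = ΘAᵀ such that Ã_{k'} and A_{k'} are linearly independent. -/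
/-!
Assumptions (2) and (3), together with the nonemptiness of the supports, make the columns of a
loading matrix linearly independent (`cols_linearIndependent`). Hence two factorizations
`Θ' * A'ᵀ = Θ * Aᵀ` are related by a matrix `G` with `Θ' = Θ * G` and `Aᵀ = G * A'ᵀ`.
If the `k`-th column of `Θ'` is not a multiple of that of `Θ`, then `G m k ≠ 0` for some `m ≠ k`.
The column `A_m = ∑ l, G m l • A'_l` then involves `A'_k`, so by independence of the columns
of `A'` it is linearly independent of `A'_m`. The given alternative factorization is therefore
itself a witness that `A_m` is not identifiable.
-/

open Matrix

/-- Each `k` lies in the row support `S` of some row `j`; restricting a linear relation to the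
rows in `R(S)` leaves only the columns in `S`, which are independent there. -/
lemma cols_linearIndependent {J K : ℕ} (A : Matrix (Fin J) (Fin K) ℝ)
    (Q : Fin J → Fin K → Bool) (h2 : Assm2 A Q) (h3 : Assm3 A Q)
    (hsupp : ∀ k : Fin K, (suppQ Q k).Nonempty) :
    LinearIndependent ℝ (fun k : Fin K => fun j : Fin J => A j k) := by
  classical
  rw [Fintype.linearIndependent_iff]
  intro g hg k
  obtain ⟨j, hj⟩ := hsupp k
  have hli := h2 {l | Q j l = true} ⟨j, fun l => Iff.rfl⟩
  rw [Fintype.linearIndependent_iff] at hli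
  refine hli (fun l => g l.1) ?_ ⟨k, hj⟩
  funext r
  have hr := congrFun hg r.1
  simp only [Finset.sum_apply, Pi.smul_apply, smul_eq_mul, Pi.zero_apply] at hr ⊢
  rw [← hr]
  refine Finset.sum_of_injOn Subtype.val Subtype.val_injective.injOn (by simp) ?_
    (fun _ _ => rfl)
  intro l _ hl
  have hQ : Q r.1 l = false := by
    rw [← Bool.not_eq_true, r.2 l]
    simpa using hl
  rw [h3 _ _ hQ, mul_zero]

lemma exists_left_inverse_of_cols {m K : ℕ} (M : Matrix (Fin m) (Fin K) ℝ)
    (h : LinearIndependent ℝ (fun k : Fin K => fun i : Fin m => M i k)) :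
    ∃ B : Matrix (Fin K) (Fin m) ℝ, B * M = 1 := by
  obtain ⟨g, hg⟩ := M.mulVecLin.exists_leftInverse_of_injective
    (LinearMap.ker_eq_bot.mpr (Matrix.mulVec_injective_iff.mpr h))
  refine ⟨LinearMap.toMatrix' g, ?_⟩
  rw [← LinearMap.toMatrix'_id, ← hg, LinearMap.toMatrix'_comp, ← Matrix.toLin'_apply',
    LinearMap.toMatrix'_toLin']

theorem exists_nonidentifiable_loading_of_nonidentifiable_factor
    {K N J : ℕ} (hK : 0 < K) (hN : 0 < N) (hJ : 0 < J)
    (Θ : Matrix (Fin N) (Fin K) ℝ) (A : Matrix (Fin J) (Fin K) ℝ)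
    (Q : Fin J → Fin K → Bool)
    (hΘ : Assm1 Θ) (hA2 : Assm2 A Q) (hA3 : Assm3 A Q)
    (hsupp : ∀ k : Fin K, (suppQ Q k).Nonempty)
    (k : Fin K)
    (hnotid : ¬ ∀ (Θ' : Matrix (Fin N) (Fin K) ℝ) (A' : Matrix (Fin J) (Fin K) ℝ),
        Assm1 Θ' → Assm2 A' Q → Assm3 A' Q → Θ' * A'ᵀ = Θ * Aᵀ →
        ∃ c : ℝ, (fun i : Fin N => Θ' i k) = c • (fun i : Fin N => Θ i k)) :
    ∃ k' : Fin K, k' ≠ k ∧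
      ∃ (Θ' : Matrix (Fin N) (Fin K) ℝ) (A' : Matrix (Fin J) (Fin K) ℝ),
        Assm1 Θ' ∧ Assm2 A' Q ∧ Assm3 A' Q ∧ Θ' * A'ᵀ = Θ * Aᵀ ∧
        LinearIndependent ℝ ![fun j : Fin J => A' j k', fun j : Fin J => A j k'] := by
  push Not at hnotid
  obtain ⟨Θ', A', h1, h2, h3, heq, hne⟩ := hnotid
  obtain ⟨C, hC⟩ := exists_left_inverse_of_cols Θ hΘ
  obtain ⟨B, hB⟩ := exists_left_inverse_of_cols A' (cols_linearIndependent A' Q h2 h3 hsupp)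
  have hBt : A'ᵀ * Bᵀ = 1 := by rw [← transpose_mul, hB, transpose_one]
  -- `G` is the change of basis between the two factorizations.
  obtain ⟨G, hG⟩ : ∃ G, G = Aᵀ * Bᵀ := ⟨_, rfl⟩
  have hΘG : Θ' = Θ * G := by
    rw [hG, ← Matrix.mul_assoc, ← heq, Matrix.mul_assoc, hBt, Matrix.mul_one]
  have hGA : Aᵀ = G * A'ᵀ := by
    have h : C * (Θ * Aᵀ) = C * (Θ * (G * A'ᵀ)) := by
      rw [← heq, hΘG, Matrix.mul_assoc]
    rwa [← Matrix.mul_assoc, ← Matrix.mul_assoc, hC, Matrix.one_mul, Matrix.one_mul] at h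
  obtain ⟨m, hmk, hm⟩ : ∃ m, m ≠ k ∧ G m k ≠ 0 := by
    by_contra! hcon
    refine hne (G k k) (funext fun i => ?_)
    rw [hΘG, Matrix.mul_apply, Finset.sum_eq_single k]
    · simp [mul_comm]
    · intro l _ hl
      simp [hcon l hl]
    · simp
  refine ⟨m, hmk, Θ', A', h1, h2, h3, heq, ?_⟩
  rw [LinearIndependent.pair_iff]
  intro s t hst
  have hcol : s • Pi.single m 1 + t • G m = (0 : Fin K → ℝ) := by
    have hA'm : B *ᵥ (fun j => A' j m) = Pi.single m 1 := by
      have h := congrArg (fun M : Matrix (Fin K) (Fin K) ℝ => M.col m) hB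
      funext l
      have := congrFun h l
      simpa [Matrix.mul_apply, Matrix.mulVec, dotProduct, Matrix.one_apply, Pi.single_apply] using this
    have hAm : B *ᵥ (fun j => A j m) = G m := by
      funext l
      simp [hG, Matrix.mul_apply, Matrix.mulVec, dotProduct, mul_comm]
    rw [← hA'm, ← hAm, ← Matrix.mulVec_smul, ← Matrix.mulVec_smul, ← Matrix.mulVec_add, hst,
      Matrix.mulVec_zero]
  have ht : t = 0 := by
    have := congrFun hcol k
    simpa [Pi.single_apply, hmk.symm, hm] using this
  have hs := congrFun hcol m
  exact ⟨by simpa [ht] using hs, ht⟩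
end
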